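/- Let f ∈ N_{k,c}^0(λ, μ, φ) with 0 < μ < 1, k = p + (b+2)/2 ∉ {0, −1, −2, …}, λ real with λ ≤ −1 and Re(μk/λ) ≥ 0, and φ convex univalent on E with φ(0) = 1 (and S_{k}^c f(z)/z, S_{k+1}^c f(z)/z nonvanishing on E). Then (S_k^c f(z)/S_{k+1}^c f(z))·(z/S_{k+1}^c f(z))^μ ≺ φ(z). -/

import Mathlib

open Complex Set

noncomputable section

/-- The open unit disk in ℂ. -/
def unitDisk : Set ℂ := Metric.ball 0 1

/-- Pochhammer symbol `(x)_n = x (x+1) ⋯ (x+n-1)`. -/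
def poch (x : ℂ) (n : ℕ) : ℂ := ∏ i ∈ Finset.range n, (x + i)

/-- `k` is not a nonpositive integer `0, -1, -2, …`. -/
def NotNonposInt (k : ℂ) : Prop := ∀ n : ℕ, k ≠ -(n : ℂ)

/-- `a` is the coefficient sequence of a function `f(z) = z + ∑_{n≥2} a_n z^n`
in the class `A` of normalized analytic functions on the unit disk. -/
def InA (a : ℕ → ℂ) : Prop :=
  a 0 = 0 ∧ a 1 = 1 ∧ ∀ z ∈ unitDisk, Summable fun n => a n * z ^ n

/-- The generalized Struve convolution operator `S_k^c` applied to
`f(z) = z + ∑_{n≥2} a_n z^n`, namely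
`S_k^c f(z) = z + ∑_{n≥1} (-c/4)^n a_{n+1} z^{n+1} / ((3/2)_n (k)_n)`. -/
def struveOp (k c : ℂ) (a : ℕ → ℂ) (z : ℂ) : ℂ :=
  z + ∑' n : ℕ,
    (-c / 4) ^ (n + 1) / (poch (3 / 2) (n + 1) * poch k (n + 1)) * a (n + 2) * z ^ (n + 2)

/-- Subordination of analytic functions on the unit disk. -/
def Subord (f g : ℂ → ℂ) : Prop :=
  ∃ w : ℂ → ℂ, AnalyticOnNhd ℂ w unitDisk ∧ w 0 = 0 ∧ (∀ z ∈ unitDisk, ‖w z‖ < 1) ∧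
    ∀ z ∈ unitDisk, f z = g (w z)

/-- `(z / F z) ^ μ` (principal branch), with the removable singularity at `z = 0`
filled in with the value `1`. -/
def ratioPow (μ : ℝ) (F : ℂ → ℂ) (z : ℂ) : ℂ :=
  (if z = 0 then 1 else z / F z) ^ (μ : ℂ)

/-- `F z / G z`, with the removable singularity at `z = 0` filled in with value `1`. -/
def ratioQ (F G : ℂ → ℂ) (z : ℂ) : ℂ := if z = 0 then 1 else F z / G z

/-- The expression
`e^{iα} {(1+λ)(z/S_{k+1}f)^μ − λ (S_k f/S_{k+1} f)(z/S_{k+1} f)^μ}`. -/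
def Jfun (α : ℝ) (lam : ℂ) (μ : ℝ) (Sk Sk1 : ℂ → ℂ) (z : ℂ) : ℂ :=
  exp (α * I) * ((1 + lam) * ratioPow μ Sk1 z - lam * ratioQ Sk Sk1 z * ratioPow μ Sk1 z)

/-- Membership `f ∈ N_{k,c}^α(λ, μ, φ)` for `f(z) = z + ∑_{n≥2} a_n z^n`. -/
def memN (α : ℝ) (lam : ℂ) (μ : ℝ) (k c : ℂ) (φ : ℂ → ℂ) (a : ℕ → ℂ) : Prop :=
  Subord (Jfun α lam μ (struveOp k c a) (struveOp (k + 1) c a))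
    (fun z => (Real.cos α : ℂ) * φ z + (Real.sin α : ℂ) * I)

/-- `φ` is convex univalent on the unit disk. -/
def ConvexUnivalent (φ : ℂ → ℂ) : Prop :=
  AnalyticOnNhd ℂ φ unitDisk ∧ InjOn φ unitDisk ∧ Convex ℝ (φ '' unitDisk)

/-- `F z / z` is nonvanishing on the unit disk. -/
def Nonvan (F : ℂ → ℂ) : Prop := ∀ z ∈ unitDisk, z ≠ 0 → F z ≠ 0

/-- The Gaussian hypergeometric function `₂F₁(a,b,c;z)` (as a series). -/
def hyp2F1 (a b c z : ℂ) : ℂ :=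
  ∑' n : ℕ, poch a n * poch b n / (poch c n * (n.factorial : ℂ)) * z ^ n

/-!
Put `p = (z / S_{k+1} f) ^ μ` and `q = S_k f / S_{k+1} f`. Comparing coefficients gives
`z (S_{k+1} f / z)' = k (S_k f / z - S_{k+1} f / z)`, hence `z p' = μ k p (1 - q)`, and membership
in the class reads `p + (λ / (μ k)) z p' ≺ φ`. At a minimum point of `Re P` on a closed disk centred
at `0` the number `z P'` is real and nonpositive; applied to the functionals separating a point from
the convex set `φ(E)`, this gives `p ≺ φ`. Finally
`q p = -λ⁻¹ (p + (λ / (μ k)) z p') + (1 + λ⁻¹) p` is a convex combination of two functions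
subordinate to `φ`.

The principal power defining `p` could a priori be discontinuous, so its differentiability has to be
deduced from the analyticity of the product `p (1 + λ - λ q)` granted by the class condition.
-/

open Filter Topology Metric

section ConvexRange

open scoped ComplexOrder

theorem mul_deriv_nonpos_of_isMinOn_re {P : ℂ → ℂ} {P' z : ℂ}
    (hmin : IsMinOn (fun w => (P w).re) (closedBall 0 ‖z‖) z) (hP : HasDerivAt P P' z) :
    z * P' ≤ 0 := by
  have re_le_re_mul (ζ : ℂ) (hζ : ‖ζ‖ ≤ 1) : (z * P').re ≤ (ζ * (z * P')).re := by
    have hdir : ζ * z - z ∈ posTangentConeAt (closedBall 0 ‖z‖) z :=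
      sub_mem_posTangentConeAt_of_segment_subset <| (convex_closedBall 0 ‖z‖).segment_subset
        (by simp) (by simpa using mul_le_of_le_one_left (norm_nonneg z) hζ)
    have hre : HasFDerivAt (fun w => (P w).re) _ z :=
      reCLM.hasFDerivAt.comp z (hP.hasFDerivAt.restrictScalars ℝ)
    have hnonneg : 0 ≤ ((ζ * z - z) * P').re := by
      simpa using hmin.localize.hasFDerivWithinAt_nonneg hre.hasFDerivWithinAt hdir
    rwa [sub_mul, sub_re, sub_nonneg, mul_assoc] at hnonneg
  obtain ⟨ζ, hζ, hζA⟩ := exists_norm_eq_mul_self (z * P')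
  have hle : (z * P').re ≤ -‖z * P'‖ := by
    simpa [neg_mul, ← hζA] using re_le_re_mul (-ζ) (by simp [hζ])
  exact re_eq_neg_norm.1 (hle.antisymm (neg_le_of_abs_le (abs_re_le_norm _)))

theorem re_pos_of_re_add_mul_deriv_pos {P : ℂ → ℂ} {β : ℂ} {R : ℝ} (hβ : 0 ≤ β.re)
    (hP : DifferentiableOn ℂ P (ball 0 R))
    (hpos : ∀ z ∈ ball 0 R, 0 < (P z + β * z * deriv P z).re) {z : ℂ} (hz : z ∈ ball 0 R) :
    0 < (P z).re := by
  have hsub : closedBall (0 : ℂ) ‖z‖ ⊆ ball 0 R := closedBall_subset_ball (by simpa using hz)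
  obtain ⟨z₀, hz₀, hmin⟩ := (isCompact_closedBall 0 ‖z‖).exists_isMinOn
    (nonempty_closedBall.2 (norm_nonneg z))
    (continuous_re.comp_continuousOn (hP.continuousOn.mono hsub))
  have hderiv : z₀ * deriv P z₀ ≤ 0 :=
    mul_deriv_nonpos_of_isMinOn_re
      (hmin.on_subset (closedBall_subset_closedBall (by simpa using hz₀)))
      (hP.differentiableAt (isOpen_ball.mem_nhds (hsub hz₀))).hasDerivAt
  have hcorr : (β * z₀ * deriv P z₀).re ≤ 0 := by
    rw [nonpos_iff] at hderiv
    rw [mul_assoc, mul_re, hderiv.2, mul_zero, sub_zero]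
    exact mul_nonpos_of_nonneg_of_nonpos hβ hderiv.1
  calc 0 < (P z₀ + β * z₀ * deriv P z₀).re := hpos z₀ (hsub hz₀)
    _ ≤ (P z₀).re := by rw [add_re]; linarith
    _ ≤ (P z).re := hmin (by simp)

theorem mapsTo_of_add_smul_deriv_mem {E : Type*} [NormedAddCommGroup E] [NormedSpace ℂ E]
    {p : ℂ → E} {β : ℂ} {R : ℝ} {Ω : Set E} (hβ : 0 ≤ β.re) (hΩo : IsOpen Ω) (hΩ : Convex ℝ Ω)
    (hp : DifferentiableOn ℂ p (ball 0 R))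
    (hmem : ∀ z ∈ ball 0 R, p z + (β * z) • deriv p z ∈ Ω) : MapsTo p (ball 0 R) Ω := by
  intro z hz
  by_contra hpz
  obtain ⟨f, hf⟩ := RCLike.geometric_hahn_banach_open_point (𝕜 := ℂ) hΩ hΩo hpz
  have hd {w : ℂ} (hw : w ∈ ball 0 R) :
      HasDerivAt (fun v => f (p z - p v)) (-f (deriv p w)) w := by
    simpa only [map_neg] using! f.hasFDerivAt.comp_hasDerivAt w
      ((hp.differentiableAt (isOpen_ball.mem_nhds hw)).hasDerivAt.const_sub (p z))
  have hpos : 0 < (f (p z - p z)).re := by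
    refine re_pos_of_re_add_mul_deriv_pos (P := fun w => f (p z - p w)) hβ
      (fun w hw => (hd hw).differentiableAt.differentiableWithinAt) (fun w hw => ?_) hz
    have hlt : (f (p w + (β * w) • deriv p w)).re < (f (p z)).re := hf _ (hmem w hw)
    rw [(hd hw).deriv]
    simp only [map_add, map_smul, map_sub, smul_eq_mul, add_re, sub_re, mul_neg, neg_re] at hlt ⊢
    linarith
  simp at hpos

end ConvexRange

section Univalent

variable {φ : ℂ → ℂ} {U : Set ℂ} {x : ℂ}

theorem not_eventually_eq_of_injOn (hinj : InjOn φ U) (hU : U ∈ 𝓝 x) :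
    ¬ ∀ᶠ z in 𝓝 x, φ z = φ x := by
  intro hconst
  have heq : ∀ᶠ z in 𝓝 x, z = x := by
    filter_upwards [hconst, hU] with z hz hzU
    exact hinj hzU (mem_of_mem_nhds hU) hz
  obtain ⟨z, hz, hzx⟩ := ((heq.filter_mono nhdsWithin_le_nhds).and
    (self_mem_nhdsWithin (a := x) (s := {x}ᶜ))).exists
  exact hzx hz

theorem nhds_le_map_nhds_of_injOn (hφ : AnalyticAt ℂ φ x) (hinj : InjOn φ U) (hU : U ∈ 𝓝 x) :
    𝓝 (φ x) ≤ map φ (𝓝 x) :=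
  hφ.eventually_constant_or_nhds_le_map_nhds.resolve_left (not_eventually_eq_of_injOn hinj hU)

theorem isOpen_image_of_injOn (hU : IsOpen U) (hφ : AnalyticOnNhd ℂ φ U) (hinj : InjOn φ U) :
    IsOpen (φ '' U) := by
  rw [isOpen_iff_mem_nhds]
  rintro _ ⟨x, hx, rfl⟩
  exact nhds_le_map_nhds_of_injOn (hφ x hx) hinj (hU.mem_nhds hx)
    (image_mem_map (hU.mem_nhds hx))

theorem eventually_deriv_ne_zero_of_injOn (hφ : AnalyticAt ℂ φ x) (hinj : InjOn φ U)
    (hU : U ∈ 𝓝 x) : ∀ᶠ z in 𝓝[≠] x, deriv φ z ≠ 0 := by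
  refine hφ.deriv.eventually_eq_zero_or_eventually_ne_zero.resolve_left fun hzero => ?_
  obtain ⟨r, hr, hball⟩ := eventually_nhds_iff_ball.1 (hzero.and hφ.eventually_analyticAt)
  refine not_eventually_eq_of_injOn hinj hU ?_
  filter_upwards [ball_mem_nhds x hr] with z hz
  exact isOpen_ball.is_const_of_deriv_eq_zero (convex_ball x r).isPreconnected
    (fun w hw => (hball w hw).2.differentiableAt.differentiableWithinAt)
    (fun w hw => (hball w hw).1) hz (mem_ball_self hr)

theorem tendsto_invFunOn_nhds (hφ : AnalyticAt ℂ φ x) (hinj : InjOn φ U) (hU : U ∈ 𝓝 x) :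
    Tendsto (Function.invFunOn φ U) (𝓝 (φ x)) (𝓝 x) := by
  have hleft : Function.invFunOn φ U ∘ φ =ᶠ[𝓝 x] id := by
    filter_upwards [hU] with z hz using hinj.leftInvOn_invFunOn hz
  refine (map_mono (nhds_le_map_nhds_of_injOn hφ hinj hU)).trans ?_
  rw [map_map, map_congr hleft, map_id]

theorem analyticOnNhd_invFunOn (hU : IsOpen U) (hφ : AnalyticOnNhd ℂ φ U) (hinj : InjOn φ U) :
    AnalyticOnNhd ℂ (Function.invFunOn φ U) (φ '' U) := by
  have hleft : ∀ x ∈ U, Function.invFunOn φ U (φ x) = x := fun x hx => hinj.leftInvOn_invFunOn hx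
  have himage : ∀ x ∈ U, φ '' U ∈ 𝓝 (φ x) := fun x hx =>
    (isOpen_image_of_injOn hU hφ hinj).mem_nhds (mem_image_of_mem φ hx)
  have htendsto : ∀ x ∈ U, Tendsto (Function.invFunOn φ U) (𝓝 (φ x)) (𝓝 x) := fun x hx =>
    tendsto_invFunOn_nhds (hφ x hx) hinj (hU.mem_nhds hx)
  have hcont : ∀ x ∈ U, ContinuousAt (Function.invFunOn φ U) (φ x) := fun x hx => by
    simpa only [ContinuousAt, hleft x hx] using htendsto x hx
  have hdiff : ∀ x ∈ U, deriv φ x ≠ 0 →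
      DifferentiableAt ℂ (Function.invFunOn φ U) (φ x) := fun x hx hne => by
    refine (HasDerivAt.of_local_left_inverse (f := φ) (hcont x hx) ?_ hne ?_).differentiableAt
    · rw [hleft x hx]
      exact (hφ x hx).differentiableAt.hasDerivAt
    · filter_upwards [himage x hx] with y hy using Function.invFunOn_eq hy
  -- Critical values are isolated, and the inverse is continuous there: removable singularities.
  rintro _ ⟨x, hx, rfl⟩
  refine analyticAt_of_differentiable_on_punctured_nhds_of_continuousAt ?_ (hcont x hx)
  have hcrit := eventually_nhdsWithin_iff.1
    (eventually_deriv_ne_zero_of_injOn (hφ x hx) hinj (hU.mem_nhds hx))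
  rw [eventually_nhdsWithin_iff]
  filter_upwards [(htendsto x hx).eventually hcrit, himage x hx] with y hne hy hyx
  obtain ⟨v, hv, rfl⟩ := hy
  rw [hleft v hv] at hne
  exact hdiff v hv (hne (ne_of_apply_ne φ hyx))

end Univalent

section Subordination

variable {f g φ : ℂ → ℂ}

theorem isOpen_unitDisk : IsOpen unitDisk := isOpen_ball

theorem zero_mem_unitDisk : (0 : ℂ) ∈ unitDisk := mem_ball_self one_pos

theorem mem_unitDisk_iff {z : ℂ} : z ∈ unitDisk ↔ ‖z‖ < 1 := mem_ball_zero_iff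

theorem isPreconnected_unitDisk : IsPreconnected unitDisk := (convex_ball 0 1).isPreconnected

theorem Subord.congr (hf : Subord f φ) (hfg : EqOn f g unitDisk) : Subord g φ := by
  obtain ⟨w, hw, hw0, hw1, hfw⟩ := hf
  exact ⟨w, hw, hw0, hw1, fun z hz => (hfg hz).symm.trans (hfw z hz)⟩

theorem Subord.apply_zero (hf : Subord f φ) : f 0 = φ 0 := by
  obtain ⟨w, -, hw0, -, hfw⟩ := hf
  rw [hfw 0 zero_mem_unitDisk, hw0]

theorem Subord.mapsTo (hf : Subord f φ) : MapsTo f unitDisk (φ '' unitDisk) := by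
  obtain ⟨w, -, -, hw1, hfw⟩ := hf
  exact fun z hz => ⟨w z, mem_unitDisk_iff.2 (hw1 z hz), (hfw z hz).symm⟩

theorem Subord.analyticOnNhd (hf : Subord f φ) (hφ : AnalyticOnNhd ℂ φ unitDisk) :
    AnalyticOnNhd ℂ f unitDisk := by
  obtain ⟨w, hw, -, hw1, hfw⟩ := hf
  exact (hφ.comp hw fun z hz => mem_unitDisk_iff.2 (hw1 z hz)).congr isOpen_unitDisk
    fun z hz => (hfw z hz).symm

theorem subord_const (φ : ℂ → ℂ) : Subord (fun _ => φ 0) φ :=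
  ⟨0, analyticOnNhd_const, rfl, by simp, fun _ _ => rfl⟩

theorem subord_of_mapsTo_image (hφ : AnalyticOnNhd ℂ φ unitDisk) (hinj : InjOn φ unitDisk)
    (hf : AnalyticOnNhd ℂ f unitDisk) (hf0 : f 0 = φ 0)
    (hmaps : MapsTo f unitDisk (φ '' unitDisk)) : Subord f φ := by
  refine ⟨Function.invFunOn φ unitDisk ∘ f,
    (analyticOnNhd_invFunOn isOpen_unitDisk hφ hinj).comp hf hmaps, ?_, ?_, ?_⟩
  · rw [Function.comp_apply, hf0]
    exact hinj.leftInvOn_invFunOn zero_mem_unitDisk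
  · exact fun z hz => mem_unitDisk_iff.1 (Function.invFunOn_mem (hmaps hz))
  · exact fun z hz => (Function.invFunOn_eq (hmaps hz)).symm

theorem ConvexUnivalent.isOpen_image (hφ : ConvexUnivalent φ) : IsOpen (φ '' unitDisk) :=
  isOpen_image_of_injOn isOpen_unitDisk hφ.1 hφ.2.1

theorem ConvexUnivalent.subord_convexCombination (hφ : ConvexUnivalent φ) (hf : Subord f φ)
    (hg : Subord g φ) {s t : ℝ} (hs : 0 ≤ s) (ht : 0 ≤ t) (hst : s + t = 1) :
    Subord (fun z => s * f z + t * g z) φ := by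
  obtain ⟨hφa, hinj, hconv⟩ := hφ
  refine subord_of_mapsTo_image hφa hinj
    ((analyticOnNhd_const.mul (hf.analyticOnNhd hφa)).add
      (analyticOnNhd_const.mul (hg.analyticOnNhd hφa))) ?_ ?_
  · rw [hf.apply_zero, hg.apply_zero, ← add_mul, ← ofReal_add, hst, ofReal_one, one_mul]
  · exact fun z hz => by simpa using hconv (hf.mapsTo hz) (hg.mapsTo hz) hs ht hst

theorem ConvexUnivalent.subord_of_add_mul_deriv (hφ : ConvexUnivalent φ) {β : ℂ}
    (hβ : 0 ≤ β.re) (hf : DifferentiableOn ℂ f unitDisk)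
    (hsub : Subord (fun z => f z + β * z * deriv f z) φ) : Subord f φ :=
  subord_of_mapsTo_image hφ.1 hφ.2.1 (hf.analyticOnNhd isOpen_unitDisk)
    (by simpa using hsub.apply_zero)
    (mapsTo_of_add_smul_deriv_mem hβ hφ.isOpen_image hφ.2.2 hf fun _ hz => hsub.mapsTo hz)

end Subordination

section PrincipalPower

variable {u R : ℂ → ℂ} {U : Set ℂ} {μ x z : ℂ}

theorem tendsto_cpow_nhdsWithin_im_neg (hre : z.re < 0) (him : z.im = 0) (μ : ℂ) :
    Tendsto (fun w => w ^ μ) (𝓝[{w | w.im < 0}] z)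
      (𝓝 (z ^ μ * exp (-(μ * (2 * Real.pi * I))))) := by
  have hz : z ≠ 0 := fun h => by simp [h] at hre
  have hlog : (Real.log ‖z‖ - Real.pi * I : ℂ) * μ = log z * μ + -(μ * (2 * Real.pi * I)) := by
    rw [log, arg_eq_pi_iff.2 ⟨hre, him⟩]
    ring
  rw [cpow_def_of_ne_zero hz, ← exp_add, ← hlog]
  refine ((continuous_exp.tendsto _).comp
    ((tendsto_log_nhdsWithin_im_neg_of_re_neg_of_im_zero hre him).mul_const μ)).congr' ?_
  filter_upwards [self_mem_nhdsWithin] with w (hw : w.im < 0)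
  have hw0 : w ≠ 0 := fun h => by simp [h] at hw
  exact (cpow_def_of_ne_zero hw0 μ).symm

theorem eq_zero_of_continuousAt_cpow_mul (hμ : ∀ n : ℤ, μ ≠ n) (hopen : 𝓝 (u z) ≤ map u (𝓝 z))
    (hu : ContinuousAt u z) (hR : ContinuousAt R z) (hre : (u z).re < 0) (him : (u z).im = 0)
    (hcont : ContinuousAt (fun w => u w ^ μ * R w) z) : R z = 0 := by
  have hlower : ∃ᶠ w in 𝓝 z, u w ∈ {y : ℂ | y.im < 0} := by
    refine frequently_map.1 (Frequently.filter_mono ?_ hopen)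
    rw [← mem_closure_iff_frequently, closure_setOfPred_im_lt]
    exact him.le
  have : (𝓝[u ⁻¹' {y : ℂ | y.im < 0}] z).NeBot :=
    mem_closure_iff_nhdsWithin_neBot.1 (mem_closure_iff_frequently.2 hlower)
  have hu' : Tendsto u (𝓝[u ⁻¹' {y : ℂ | y.im < 0}] z) (𝓝[{y : ℂ | y.im < 0}] (u z)) :=
    hu.continuousWithinAt.tendsto_nhdsWithin fun _ hw => hw
  have hlim := ((tendsto_cpow_nhdsWithin_im_neg hre him μ).comp hu').mul
    (hR.tendsto.mono_left nhdsWithin_le_nhds)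
  have hjump : u z ^ μ * exp (-(μ * (2 * Real.pi * I))) * R z = u z ^ μ * R z :=
    tendsto_nhds_unique hlim (hcont.tendsto.mono_left nhdsWithin_le_nhds)
  have huz : u z ^ μ ≠ 0 := cpow_ne_zero_iff.2 (Or.inl fun h => by simp [h] at hre)
  have hexp : exp (-(μ * (2 * Real.pi * I))) ≠ 1 := by
    rw [Ne, exp_eq_one_iff]
    rintro ⟨n, hn⟩
    refine hμ (-n) (mul_right_cancel₀ two_pi_I_ne_zero ?_)
    push_cast
    linear_combination -hn
  by_contra hRz
  exact hexp (mul_left_cancel₀ huz (by simpa using mul_right_cancel₀ hRz hjump))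

theorem frequently_notMem_slitPlane (hz : z ∉ slitPlane) : ∃ᶠ w in 𝓝[≠] z, w ∉ slitPlane := by
  have htendsto : Tendsto (fun t : ℝ => z - t) (𝓝[>] 0) (𝓝[≠] z) := by
    refine tendsto_nhdsWithin_iff.2 ⟨?_, ?_⟩
    · have hcont : Continuous fun t : ℝ => z - t := by fun_prop
      simpa using (hcont.tendsto 0).mono_left nhdsWithin_le_nhds
    · filter_upwards [self_mem_nhdsWithin] with t (ht : 0 < t)
      simp [ht.ne']
  refine htendsto.frequently (Eventually.frequently ?_)
  filter_upwards [self_mem_nhdsWithin] with t (ht : 0 < t)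
  rw [mem_slitPlane_iff, not_or, not_lt, not_not] at hz ⊢
  constructor
  · simp only [sub_re, ofReal_re]
    linarith [hz.1]
  · simp [hz.2]

-- Wherever `u` meets the cut, the jump of `w ↦ w ^ μ` across it forces `R` to vanish; but `u` is
-- open, so it would meet the cut along a set with an accumulation point.
theorem mapsTo_slitPlane_of_continuousOn_cpow_mul (hU : IsOpen U) (hUc : IsPreconnected U)
    (hμ : ∀ n : ℤ, μ ≠ n) (hu : AnalyticOnNhd ℂ u U) (hR : AnalyticOnNhd ℂ R U)
    (hu0 : ∀ z ∈ U, u z ≠ 0) (hcont : ContinuousOn (fun z => u z ^ μ * R z) U) (hx : x ∈ U)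
    (hux : u x ∈ slitPlane) (hRx : R x ≠ 0) : MapsTo u U slitPlane := by
  intro z hz
  by_contra hzslit
  have hopen : ∀ w ∈ U, 𝓝 (u w) ≤ map u (𝓝 w) := fun w hw => by
    refine (hu w hw).eventually_constant_or_nhds_le_map_nhds.resolve_left fun hconst => ?_
    have heq := hu.eqOn_of_preconnected_of_eventuallyEq analyticOnNhd_const hUc hw hconst
    exact hzslit ((heq hz).trans (heq hx).symm ▸ hux)
  have hRzero : ∀ w ∈ U, u w ∉ slitPlane → R w = 0 := fun w hw hslit => by
    rw [mem_slitPlane_iff, not_or, not_lt, not_not] at hslit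
    have hre : (u w).re ≠ 0 := fun h => hu0 w hw (Complex.ext h hslit.2)
    exact eq_zero_of_continuousAt_cpow_mul hμ (hopen w hw) (hu w hw).continuousAt
      (hR w hw).continuousAt (hslit.1.lt_of_ne hre) hslit.2 (hcont.continuousAt (hU.mem_nhds hw))
  have hfreq : ∃ᶠ w in 𝓝[≠] z, R w = 0 := by
    have hcut := frequently_map.1
      ((frequently_nhdsWithin_iff.1 (frequently_notMem_slitPlane hzslit)).filter_mono (hopen z hz))
    rw [frequently_nhdsWithin_iff]
    refine (hcut.and_eventually (hU.mem_nhds hz)).mono fun w ⟨⟨hslit, hne⟩, hw⟩ => ?_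
    exact ⟨hRzero w hw hslit, ne_of_apply_ne u hne⟩
  exact hRx (hR.eqOn_zero_of_preconnected_of_frequently_eq_zero hUc hz hfreq hx)

theorem hasDerivAt_cpow_of_continuousOn_cpow_mul (hU : IsOpen U) (hUc : IsPreconnected U)
    (hu : AnalyticOnNhd ℂ u U) (hR : AnalyticOnNhd ℂ R U) (hu0 : ∀ z ∈ U, u z ≠ 0)
    (hcont : ContinuousOn (fun z => u z ^ μ * R z) U) (hx : x ∈ U) (hux : u x ∈ slitPlane)
    (hRx : R x ≠ 0) (hz : z ∈ U) :
    HasDerivAt (fun w => u w ^ μ) (μ * logDeriv u z * u z ^ μ) z := by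
  have hud : HasDerivAt u (deriv u z) z := (hu z hz).differentiableAt.hasDerivAt
  have huz := hu0 z hz
  by_cases hμ : ∃ n : ℤ, μ = n
  · obtain ⟨n, rfl⟩ := hμ
    simp only [cpow_intCast]
    convert! (hasDerivAt_zpow n (u z) (Or.inl huz)).comp z hud using 1
    rw [logDeriv_apply, zpow_sub_one₀ huz]
    ring
  · push Not at hμ
    have hslit := mapsTo_slitPlane_of_continuousOn_cpow_mul hU hUc hμ hu hR hu0 hcont hx hux hRx hz
    convert! hud.cpow_const hslit using 1
    rw [logDeriv_apply, cpow_sub _ _ huz, cpow_one]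
    ring

end PrincipalPower

section PowerSeries

variable {b : ℕ → ℂ} {R : ℝ}

theorem exists_summable_bound_on_ball (hb : ∀ z ∈ ball (0 : ℂ) R, Summable fun n => b n * z ^ n)
    {z : ℂ} (hz : z ∈ ball 0 R) :
    ∃ r, z ∈ ball 0 r ∧ ∃ v : ℕ → ℝ, Summable v ∧ ∀ n, ∀ w ∈ ball 0 r, ‖b n * w ^ n‖ ≤ v n := by
  obtain ⟨r, hzr, hrR⟩ := exists_between (mem_ball_zero_iff.1 hz)
  have hr : ‖(r : ℂ)‖ = r := Complex.norm_of_nonneg ((norm_nonneg z).trans hzr.le)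
  refine ⟨r, mem_ball_zero_iff.2 hzr, _,
    (hb r (mem_ball_zero_iff.2 (hr.trans_lt hrR))).norm, fun n w hw => ?_⟩
  rw [norm_mul, norm_mul, norm_pow, norm_pow, hr]
  gcongr
  exact (mem_ball_zero_iff.1 hw).le

theorem differentiableOn_tsum_mul_pow
    (hb : ∀ z ∈ ball (0 : ℂ) R, Summable fun n => b n * z ^ n) :
    DifferentiableOn ℂ (fun z => ∑' n, b n * z ^ n) (ball 0 R) := by
  intro z hz
  obtain ⟨r, hzr, v, hv, hle⟩ := exists_summable_bound_on_ball hb hz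
  have hdiff := differentiableOn_tsum_of_summable_norm hv (fun n => by fun_prop) isOpen_ball hle
  exact (hdiff.differentiableAt (isOpen_ball.mem_nhds hzr)).differentiableWithinAt

theorem hasSum_mul_deriv_tsum_mul_pow
    (hb : ∀ z ∈ ball (0 : ℂ) R, Summable fun n => b n * z ^ n) {z : ℂ} (hz : z ∈ ball 0 R) :
    HasSum (fun n : ℕ => n * (b n * z ^ n)) (z * deriv (fun w => ∑' n, b n * w ^ n) z) := by
  obtain ⟨r, hzr, v, hv, hle⟩ := exists_summable_bound_on_ball hb hz
  refine ((hasSum_deriv_of_summable_norm hv (fun n => by fun_prop) isOpen_ball hle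
    hzr).mul_left z).congr_fun fun n => ?_
  rw [((hasDerivAt_pow n z).const_mul (b n)).deriv]
  cases n with
  | zero => simp
  | succ m => simp only [Nat.add_sub_cancel, pow_succ]; ring

theorem summable_mul_of_summable {f g : ℕ → ℂ} (hf : Summable f) (hg : Summable g) :
    Summable fun n => f n * g n := by
  have hO : (fun n => f n * g n) =O[atTop] fun n => (1 : ℝ) * ‖g n‖ :=
    (hf.tendsto_atTop_zero.isBigO_one ℝ).mul (Asymptotics.isBigO_refl g atTop).norm_right
  simp only [one_mul] at hO
  exact summable_of_isBigO_nat hg.norm hO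

theorem summable_succ_mul_pow {a : ℕ → ℂ} {z : ℂ} (h : Summable fun n => a n * z ^ n) :
    Summable fun n => a (n + 1) * z ^ n := by
  rcases eq_or_ne z 0 with rfl | hz
  · exact summable_of_ne_finset_zero (s := {0}) fun n hn => by
      simp [Finset.mem_singleton.not.1 hn]
  · refine (((summable_nat_add_iff 1).2 h).mul_left z⁻¹).congr fun n => ?_
    field_simp
    ring

end PowerSeries

section StruveOperator

/-- The multiplier `xⁿ / ((3/2)ₙ (k)ₙ)` by which `S_k^c`, with `x = -c/4`, acts on the coefficient
of `z ^ (n + 1)`. -/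
def struveCoeff (k x : ℂ) (n : ℕ) : ℂ := x ^ n / (poch (3 / 2) n * poch k n)

/-- The power series `S_k^c f(z) / z`, which has no singularity at `z = 0`; as in `struveOp`, `f` is
given by its coefficients `a`. -/
def struveQuot (k c : ℂ) (a : ℕ → ℂ) (z : ℂ) : ℂ :=
  ∑' n : ℕ, struveCoeff k (-c / 4) n * a (n + 1) * z ^ n

variable {k c z : ℂ} {a : ℕ → ℂ}

theorem poch_succ (k : ℂ) (n : ℕ) : poch k (n + 1) = poch k n * (k + n) :=
  Finset.prod_range_succ _ n

theorem poch_succ' (k : ℂ) (n : ℕ) : poch k (n + 1) = k * poch (k + 1) n := by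
  simp only [poch, Finset.prod_range_succ', Nat.cast_zero, add_zero, Nat.cast_succ]
  rw [mul_comm]
  congr! 2
  ring

theorem NotNonposInt.ne_zero (hk : NotNonposInt k) : k ≠ 0 := by simpa using hk 0

theorem NotNonposInt.poch_ne_zero (hk : NotNonposInt k) (n : ℕ) : poch k n ≠ 0 :=
  Finset.prod_ne_zero_iff.2 fun i _ h => hk i (eq_neg_of_add_eq_zero_left h)

theorem struveCoeff_zero (k x : ℂ) : struveCoeff k x 0 = 1 := by simp [struveCoeff, poch]

theorem struveCoeff_succ (k x : ℂ) (n : ℕ) :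
    struveCoeff k x (n + 1) = x * ((3 / 2 + n : ℂ)⁻¹ * (k + n)⁻¹) * struveCoeff k x n := by
  simp only [struveCoeff, poch_succ, pow_succ, div_eq_mul_inv, mul_inv]
  ring

theorem mul_struveCoeff (hk : NotNonposInt k) (x : ℂ) (n : ℕ) :
    k * struveCoeff k x n = (k + n) * struveCoeff (k + 1) x n := by
  have hpoch : k * poch (k + 1) n = poch k n * (k + n) := by rw [← poch_succ', poch_succ]
  have hk1 : poch (k + 1) n ≠ 0 :=
    right_ne_zero_of_mul (poch_succ' k n ▸ hk.poch_ne_zero (n + 1))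
  have hquot : k / poch k n = (k + n) / poch (k + 1) n := by
    rw [div_eq_div_iff (hk.poch_ne_zero n) hk1, hpoch, mul_comm]
  calc k * struveCoeff k x n = x ^ n / poch (3 / 2) n * (k / poch k n) := by
        rw [struveCoeff]; ring
    _ = (k + n) * struveCoeff (k + 1) x n := by rw [hquot, struveCoeff]; ring

theorem summable_struveCoeff (k x : ℂ) : Summable (struveCoeff k x) := by
  have hinv (y : ℂ) : Tendsto (fun n : ℕ => (y + n)⁻¹) atTop (𝓝 0) :=
    tendsto_inv₀_cobounded.comp
      ((tendsto_const_add_cobounded y).comp tendsto_natCast_atTop_cobounded)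
  have hratio : Tendsto (fun n : ℕ => ‖x * ((3 / 2 + n : ℂ)⁻¹ * (k + n)⁻¹)‖) atTop (𝓝 0) := by
    simpa using (((hinv (3 / 2)).mul (hinv k)).const_mul x).norm
  refine summable_of_ratio_norm_eventually_le (r := 1 / 2) (by norm_num) ?_
  filter_upwards [hratio.eventually_le_const one_half_pos] with n hn
  rw [struveCoeff_succ, norm_mul]
  gcongr

theorem InA.summable_struveQuot (ha : InA a) (k c : ℂ) :
    ∀ z ∈ unitDisk, Summable fun n => struveCoeff k (-c / 4) n * a (n + 1) * z ^ n := by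
  intro z hz
  simpa only [mul_assoc] using
    summable_mul_of_summable (summable_struveCoeff k (-c / 4)) (summable_succ_mul_pow (ha.2.2 z hz))

theorem InA.analyticOnNhd_struveQuot (ha : InA a) (k c : ℂ) :
    AnalyticOnNhd ℂ (struveQuot k c a) unitDisk :=
  (differentiableOn_tsum_mul_pow (ha.summable_struveQuot k c)).analyticOnNhd isOpen_unitDisk

theorem InA.struveQuot_zero (ha : InA a) (k c : ℂ) : struveQuot k c a 0 = 1 := by
  rw [struveQuot, tsum_eq_single 0 fun n hn => by simp [hn]]
  simp [struveCoeff_zero, ha.2.1]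

theorem InA.struveOp_eq_mul_struveQuot (ha : InA a) (k c : ℂ) (hz : z ∈ unitDisk) :
    struveOp k c a z = z * struveQuot k c a z := by
  rw [struveQuot, (ha.summable_struveQuot k c z hz).tsum_eq_zero_add, struveOp, mul_add,
    ← tsum_mul_left]
  congr 1
  · simp [struveCoeff_zero, ha.2.1]
  · refine tsum_congr fun n => ?_
    rw [struveCoeff]
    ring

theorem InA.mul_deriv_struveQuot (ha : InA a) (hk : NotNonposInt k) (c : ℂ) (hz : z ∈ unitDisk) :
    z * deriv (struveQuot (k + 1) c a) z = k * (struveQuot k c a z - struveQuot (k + 1) c a z) := by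
  have hdiff := (((ha.summable_struveQuot k c z hz).hasSum.sub
    (ha.summable_struveQuot (k + 1) c z hz).hasSum).mul_left k)
  refine (hasSum_mul_deriv_tsum_mul_pow (ha.summable_struveQuot (k + 1) c) hz).unique
    (hdiff.congr_fun fun n => ?_)
  linear_combination (-(a (n + 1) * z ^ n)) * mul_struveCoeff hk (-c / 4) n

theorem InA.struveQuot_ne_zero (ha : InA a) (hnv : Nonvan (struveOp k c a)) (hz : z ∈ unitDisk) :
    struveQuot k c a z ≠ 0 := by
  rcases eq_or_ne z 0 with rfl | hz0
  · simp [ha.struveQuot_zero]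
  · exact right_ne_zero_of_mul (ha.struveOp_eq_mul_struveQuot k c hz ▸ hnv z hz hz0)

theorem InA.ratioPow_struveOp (ha : InA a) (μ : ℝ) (k c : ℂ) :
    EqOn (ratioPow μ (struveOp k c a)) (fun z => (struveQuot k c a z)⁻¹ ^ (μ : ℂ)) unitDisk := by
  intro z hz
  rcases eq_or_ne z 0 with rfl | hz0
  · simp [ratioPow, ha.struveQuot_zero]
  · simp [ratioPow, hz0, ha.struveOp_eq_mul_struveQuot k c hz, div_mul_eq_div_div]

theorem InA.ratioQ_struveOp (ha : InA a) (k l c : ℂ) :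
    EqOn (ratioQ (struveOp k c a) (struveOp l c a))
      (fun z => struveQuot k c a z / struveQuot l c a z) unitDisk := by
  intro z hz
  rcases eq_or_ne z 0 with rfl | hz0
  · simp [ratioQ, ha.struveQuot_zero]
  · simp [ratioQ, hz0, ha.struveOp_eq_mul_struveQuot _ c hz, mul_div_mul_left]

theorem InA.analyticOnNhd_ratioQ_struveOp (ha : InA a) (k : ℂ) {l : ℂ}
    (hnv : Nonvan (struveOp l c a)) :
    AnalyticOnNhd ℂ (ratioQ (struveOp k c a) (struveOp l c a)) unitDisk :=
  ((ha.analyticOnNhd_struveQuot k c).div (ha.analyticOnNhd_struveQuot l c)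
    fun _ hz => ha.struveQuot_ne_zero hnv hz).congr isOpen_unitDisk
    (ha.ratioQ_struveOp k l c).symm

theorem InA.mul_logDeriv_inv_struveQuot (ha : InA a) (hk : NotNonposInt k)
    (hnv : Nonvan (struveOp (k + 1) c a)) (hz : z ∈ unitDisk) :
    z * logDeriv (fun w => (struveQuot (k + 1) c a w)⁻¹) z =
      k * (1 - ratioQ (struveOp k c a) (struveOp (k + 1) c a) z) := by
  have hne := ha.struveQuot_ne_zero hnv hz
  have hd := (ha.analyticOnNhd_struveQuot (k + 1) c z hz).differentiableAt.hasDerivAt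
  rw [logDeriv_apply, (hd.fun_inv hne).deriv, ha.ratioQ_struveOp k (k + 1) c hz]
  field_simp
  linear_combination -ha.mul_deriv_struveQuot hk c hz

end StruveOperator

section StruveQuotientClass

variable {μ : ℝ} {lam k c : ℂ} {φ : ℂ → ℂ} {a : ℕ → ℂ}

theorem memN.subord (hmem : memN 0 lam μ k c φ a) :
    Subord (fun z => ratioPow μ (struveOp (k + 1) c a) z *
      (1 + lam - lam * ratioQ (struveOp k c a) (struveOp (k + 1) c a) z)) φ := by
  have hJ : Subord (Jfun 0 lam μ (struveOp k c a) (struveOp (k + 1) c a)) φ := by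
    simpa [memN] using hmem
  refine hJ.congr fun z _ => ?_
  simp only [Jfun, ofReal_zero, zero_mul, exp_zero, one_mul]
  ring

theorem memN.apply_zero (hmem : memN 0 lam μ k c φ a) : φ 0 = 1 := by
  rw [← hmem.subord.apply_zero]
  simp [ratioPow, ratioQ]

theorem memN.hasDerivAt_ratioPow (hmem : memN 0 lam μ k c φ a) (hφ : AnalyticOnNhd ℂ φ unitDisk)
    (ha : InA a) (hnv : Nonvan (struveOp (k + 1) c a)) {z : ℂ} (hz : z ∈ unitDisk) :
    HasDerivAt (ratioPow μ (struveOp (k + 1) c a))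
      (μ * logDeriv (fun w => (struveQuot (k + 1) c a w)⁻¹) z *
        ratioPow μ (struveOp (k + 1) c a) z) z := by
  have hpow := ha.ratioPow_struveOp μ (k + 1) c
  have hne : ∀ w ∈ unitDisk, struveQuot (k + 1) c a w ≠ 0 := fun _ hw =>
    ha.struveQuot_ne_zero hnv hw
  have hcont : ContinuousOn (fun w => (struveQuot (k + 1) c a w)⁻¹ ^ (μ : ℂ) *
      (1 + lam - lam * ratioQ (struveOp k c a) (struveOp (k + 1) c a) w)) unitDisk :=
    (hmem.subord.analyticOnNhd hφ).continuousOn.congr fun w hw => by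
      simp only [hpow hw]
  rw [hpow hz]
  refine (hasDerivAt_cpow_of_continuousOn_cpow_mul isOpen_unitDisk isPreconnected_unitDisk
    ((ha.analyticOnNhd_struveQuot (k + 1) c).inv hne)
    (analyticOnNhd_const.sub (analyticOnNhd_const.mul (ha.analyticOnNhd_ratioQ_struveOp k hnv)))
    (fun w hw => inv_ne_zero (hne w hw)) hcont zero_mem_unitDisk ?_ ?_ hz).congr_of_eventuallyEq
    (hpow.eventuallyEq_of_mem (isOpen_unitDisk.mem_nhds hz))
  · simp [ha.struveQuot_zero]
  · simp [ratioQ]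

theorem memN.ratioPow_add_mul_deriv (hmem : memN 0 lam μ k c φ a)
    (hφ : AnalyticOnNhd ℂ φ unitDisk) (ha : InA a) (hk : NotNonposInt k) (hμ : μ ≠ 0)
    (hnv : Nonvan (struveOp (k + 1) c a)) {z : ℂ} (hz : z ∈ unitDisk) :
    ratioPow μ (struveOp (k + 1) c a) z +
        (μ * k / lam)⁻¹ * z * deriv (ratioPow μ (struveOp (k + 1) c a)) z =
      ratioPow μ (struveOp (k + 1) c a) z *
        (1 + lam - lam * ratioQ (struveOp k c a) (struveOp (k + 1) c a) z) := by
  have hlog := ha.mul_logDeriv_inv_struveQuot hk hnv hz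
  have hμ' : (μ : ℂ) ≠ 0 := ofReal_ne_zero.2 hμ
  have hk0 := hk.ne_zero
  have hcoeff : (μ * k / lam)⁻¹ * (μ * k) = lam := by field_simp
  rw [(hmem.hasDerivAt_ratioPow hφ ha hnv hz).deriv]
  linear_combination
    ratioPow μ (struveOp (k + 1) c a) z * ((μ * k / lam)⁻¹ * μ * hlog +
      (1 - ratioQ (struveOp k c a) (struveOp (k + 1) c a) z) * hcoeff)

theorem memN.subord_ratioPow (hmem : memN 0 lam μ k c φ a) (hφ : ConvexUnivalent φ) (ha : InA a)
    (hk : NotNonposInt k) (hre : 0 ≤ (μ * k / lam).re) (hnv : Nonvan (struveOp (k + 1) c a)) :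
    Subord (ratioPow μ (struveOp (k + 1) c a)) φ := by
  rcases eq_or_ne μ 0 with rfl | hμ
  · exact (subord_const φ).congr fun z _ => by simp [ratioPow, hmem.apply_zero]
  · have hβ : 0 ≤ (μ * k / lam)⁻¹.re := by
      rw [inv_re]
      exact div_nonneg hre (normSq_nonneg _)
    have hdiff : DifferentiableOn ℂ (ratioPow μ (struveOp (k + 1) c a)) unitDisk := fun z hz =>
      (hmem.hasDerivAt_ratioPow hφ.1 ha hnv hz).differentiableAt.differentiableWithinAt
    exact hφ.subord_of_add_mul_deriv hβ hdiff
      (hmem.subord.congr fun z hz => (hmem.ratioPow_add_mul_deriv hφ.1 ha hk hμ hnv hz).symm)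

end StruveQuotientClass

theorem quotient_subordination_general (μ : ℝ) (k c : ℂ) (lam : ℝ) (φ : ℂ → ℂ) (a : ℕ → ℂ)
    (hk : NotNonposInt k) (hlam : lam ≤ -1)
    (hre : 0 ≤ ((μ : ℂ) * k / (lam : ℂ)).re)
    (hφ : ConvexUnivalent φ) (ha : InA a)
    (hnv1 : Nonvan (struveOp (k + 1) c a))
    (hmem : memN 0 (lam : ℂ) μ k c φ a) :
    Subord
      (fun z => ratioQ (struveOp k c a) (struveOp (k + 1) c a) z *
        ratioPow μ (struveOp (k + 1) c a) z)
      φ := by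
  have hlam0 : lam < 0 := by linarith
  have hinv : -1 ≤ lam⁻¹ := by simpa using (inv_le_inv_of_neg (by norm_num) hlam0).2 hlam
  have hcombo := hφ.subord_convexCombination hmem.subord
    (hmem.subord_ratioPow hφ ha hk hre hnv1) (neg_nonneg.2 (inv_nonpos.2 hlam0.le))
    (by linarith : 0 ≤ 1 + lam⁻¹) (by ring)
  refine hcombo.congr fun z _ => ?_
  have hlam' : (lam : ℂ) ≠ 0 := ofReal_ne_zero.2 hlam0.ne
  push_cast
  field_simp
  ring

/-- if `f ∈ N_{k,c}^0(λ, μ, φ)` with `λ ≤ -1` and `Re(μk/λ) ≥ 0`,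
then `(S_k^c f(z)/S_{k+1}^c f(z)) (z/S_{k+1}^c f(z))^μ ≺ φ(z)`. -/
theorem quotient_subordination (μ : ℝ) (k c : ℂ) (lam : ℝ) (φ : ℂ → ℂ) (a : ℕ → ℂ)
    (hμ0 : 0 < μ) (hμ1 : μ < 1)
    (hk : NotNonposInt k) (hlam : lam ≤ -1)
    (hre : 0 ≤ ((μ : ℂ) * k / (lam : ℂ)).re)
    (hφ : ConvexUnivalent φ) (hφ0 : φ 0 = 1)
    (ha : InA a)
    (hnv : Nonvan (struveOp k c a)) (hnv1 : Nonvan (struveOp (k + 1) c a))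
    (hmem : memN 0 (lam : ℂ) μ k c φ a) :
    Subord
      (fun z => ratioQ (struveOp k c a) (struveOp (k + 1) c a) z *
        ratioPow μ (struveOp (k + 1) c a) z)
      φ :=
  quotient_subordination_general μ k c lam φ a hk hlam hre hφ ha hnv1 hmem
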